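/- arXiv:1007.3550 — 2 statements merged into one kernel-verified Lean document; each statement's English description precedes it below -/
import Mathlib

section
/- Let X be a finite rack with rack rank N. Then the subgroups C_n^{ND}(X) of N-degenerate chains form a subcomplex of the rack chain complex: ∂_n(C_n^{ND}(X)) ⊆ C_{n−1}^{ND}(X) for all n. -/
/-- A rack: a set with operations `act` (x ▷ y) and `inv` (x ▷⁻¹ y) satisfying
(i) (x ▷ y) ▷⁻¹ y = x = (x ▷⁻¹ y) ▷ y and (ii) right self-distributivity. -/
class Rack' (X : Type*) where
  act : X → X → X
  inv : X → X → X
  act_inv : ∀ x y : X, inv (act x y) y = x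
  inv_act : ∀ x y : X, act (inv x y) y = x
  distrib : ∀ x y z : X, act (act x y) z = act (act x z) (act y z)

open Rack'
/-- The kink map π(x) = x ▷ x. -/
def Rack'.kink {X : Type*} [Rack' X] (x : X) : X := Rack'.act x x

/-- Rack powers: x^{▷1} = x ▷ x and x^{▷(k+1)} = x^{▷k} ▷ x^{▷k}
(with x^{▷0} = x as a convenient base case). -/
def Rack'.rpow {X : Type*} [Rack' X] (x : X) : ℕ → X
  | 0 => x
  | k + 1 => Rack'.act (Rack'.rpow x k) (Rack'.rpow x k)
/-- The i-th face of an (n+1)-tuple: delete the entry at position i. -/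
def face {X : Type*} {n : ℕ} (i : Fin (n + 1)) (x : Fin (n + 1) → X) : Fin n → X :=
  fun j => x (i.succAbove j)

/-- The twisted i-th face: delete the entry at position i and act by x_i on all
earlier entries. -/
def tface {X : Type*} [Rack' X] {n : ℕ} (i : Fin (n + 1)) (x : Fin (n + 1) → X) :
    Fin n → X :=
  fun j => if ((i.succAbove j : Fin (n + 1)) : ℕ) < (i : ℕ)
    then Rack'.act (x (i.succAbove j)) (x i) else x (i.succAbove j)

/-- The rack homology boundary map ∂ : C_{n+1}^R(X) → C_n^R(X), where
C_m^R(X) is the free abelian group on m-tuples of elements of X; on a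
generator (x₁,…,x_m) it is Σ_{i=2}^m (−1)^i [(x₁,…,x̂_i,…,x_m) −
(x₁▷x_i,…,x_{i−1}▷x_i,x_{i+1},…,x_m)] (here indices are 0-based, so the
1-based index i corresponds to (i:ℕ)+1). -/
def bdry {X : Type*} [Rack' X] (n : ℕ) :
    FreeAbelianGroup (Fin (n + 1) → X) →+ FreeAbelianGroup (Fin n → X) :=
  FreeAbelianGroup.lift fun x =>
    ∑ i : Fin (n + 1), if (i : ℕ) = 0 then 0 else
      ((-1 : ℤ) ^ ((i : ℕ) + 1)) •
        (FreeAbelianGroup.of (face i x) - FreeAbelianGroup.of (tface i x))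

/-- The subgroup of N-degenerate n-chains: generated by the chains
Σ_{k=1}^N (x₁,…,x_{i−1}, x_i^{▷k}, x_i^{▷(k+1)}, x_{i+2},…,x_n),
where x^{▷k} = π^k(x) for the kink map π. -/
def NDsub (X : Type*) [Rack' X] (N n : ℕ) :
    AddSubgroup (FreeAbelianGroup (Fin n → X)) :=
  AddSubgroup.closure
    { c | ∃ (z : Fin n → X) (i : Fin n) (h : (i : ℕ) + 1 < n),
        c = ∑ k ∈ Finset.Icc 1 N, FreeAbelianGroup.of
          (fun j => if j = i then (Rack'.kink (X := X))^[k] (z i)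
            else if j = ⟨(i : ℕ) + 1, h⟩ then (Rack'.kink (X := X))^[k + 1] (z i)
            else z j) }


namespace NDProof

/-- The `k`-th term of a degenerate chain, with natural-number position `p`. -/
def w {X : Type*} [Rack' X] {n : ℕ} (z : Fin n → X) (a : X) (p k : ℕ) : Fin n → X :=
  fun j => if (j : ℕ) = p then (Rack'.kink (X := X))^[k] a
    else if (j : ℕ) = p + 1 then (Rack'.kink (X := X))^[k + 1] a else z j

theorem act_kink {X : Type*} [Rack' X] (x y : X) :
    Rack'.act x (Rack'.kink y) = Rack'.act x y := by
  have h := Rack'.distrib (Rack'.inv x y) y y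
  rw [Rack'.inv_act] at h
  exact h.symm

theorem act_iter {X : Type*} [Rack' X] (x y : X) (k : ℕ) :
    Rack'.act x ((Rack'.kink (X := X))^[k + 1] y)
      = Rack'.act x ((Rack'.kink (X := X))^[k] y) := by
  rw [Function.iterate_succ_apply', act_kink]

theorem iter_act {X : Type*} [Rack' X] (x y : X) (k : ℕ) :
    Rack'.act ((Rack'.kink (X := X))^[k] x) y
      = (Rack'.kink (X := X))^[k] (Rack'.act x y) := by
  induction k with
  | zero => rfl
  | succ k ih =>
    rw [Function.iterate_succ_apply', Function.iterate_succ_apply', ← ih]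
    exact Rack'.distrib _ _ _

theorem sA {n : ℕ} (l : Fin (n + 1)) (j : Fin n) :
    ((l.succAbove j : Fin (n + 1)) : ℕ) = if (j : ℕ) < l then (j : ℕ) else j + 1 := by
  unfold Fin.succAbove
  simp only [Fin.lt_def, Fin.val_castSucc]
  split <;> simp

theorem w_mem {X : Type*} [Rack' X] {n N : ℕ} (z : Fin n → X) (a : X) (p : ℕ)
    (h : p + 1 < n) :
    ∑ k ∈ Finset.Icc 1 N, FreeAbelianGroup.of (w z a p k) ∈ NDsub X N n := by
  apply AddSubgroup.subset_closure
  refine ⟨Function.update z ⟨p, by omega⟩ a, ⟨p, by omega⟩, h, ?_⟩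
  refine Finset.sum_congr rfl fun k _ => ?_
  congr 1
  funext j
  simp only [w, Fin.ext_iff, Function.update_self]
  split_ifs with h1 h2 <;> try rfl
  rw [Function.update_of_ne]
  simpa [Fin.ext_iff] using h1

theorem face_gt {X : Type*} [Rack' X] {n : ℕ} (z : Fin (n + 1) → X) (a : X) (p k : ℕ)
    (l : Fin (n + 1)) (h : p + 1 < l) :
    face l (w z a p k) = w (face l z) a p k := by
  funext j
  simp only [face, w, sA]
  split_ifs <;> first | rfl | omega

theorem face_lt {X : Type*} [Rack' X] {n : ℕ} (z : Fin (n + 1) → X) (a : X) (p k : ℕ)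
    (l : Fin (n + 1)) (h : (l : ℕ) < p + 1) :
    face l (w z a (p + 1) k) = w (face l z) a p k := by
  funext j
  simp only [face, w, sA]
  split_ifs <;> first | rfl | omega

theorem tface_gt {X : Type*} [Rack' X] {n : ℕ} (z : Fin (n + 1) → X) (a : X) (p k : ℕ)
    (l : Fin (n + 1)) (h : p + 1 < l) :
    tface l (w z a p k) = w (tface l z) (Rack'.act a (z l)) p k := by
  have hl : w z a p k l = z l := by
    simp only [w]; split_ifs <;> first | rfl | omega
  funext j
  simp only [tface, hl]
  simp only [w, tface, sA, ← iter_act]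
  split_ifs <;> first | rfl | omega

theorem tface_lt {X : Type*} [Rack' X] {n : ℕ} (z : Fin (n + 1) → X) (a : X) (p k : ℕ)
    (l : Fin (n + 1)) (h : (l : ℕ) < p + 1) :
    tface l (w z a (p + 1) k) = w (tface l z) a p k := by
  have hl : w z a (p + 1) k l = z l := by
    simp only [w]; split_ifs <;> first | rfl | omega
  funext j
  simp only [tface, hl]
  simp only [w, tface, sA]
  split_ifs <;> first | rfl | omega

theorem face_mid {X : Type*} [Rack' X] {n : ℕ} (z : Fin (n + 1) → X) (a : X) (k : ℕ)
    (i i' : Fin (n + 1)) (h : (i' : ℕ) = i + 1) :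
    face i (w z a i k) = face i' (w z a i (k + 1)) := by
  funext j
  simp only [face, w, sA]
  split_ifs <;> first
    | rfl
    | omega
    | (congr 1; apply Fin.ext; rw [sA, sA]; split_ifs <;> omega)

theorem tface_mid {X : Type*} [Rack' X] {n : ℕ} (z : Fin (n + 1) → X) (a : X) (k : ℕ)
    (i i' : Fin (n + 1)) (h : (i' : ℕ) = i + 1) :
    tface i (w z a i k) = tface i' (w z a i k) := by
  have hl : w z a i k i = (Rack'.kink (X := X))^[k] a := by simp [w]
  have hl' : w z a i k i' = (Rack'.kink (X := X))^[k + 1] a := by simp [w, h]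
  funext j
  simp only [tface, hl, hl', act_iter]
  simp only [w, sA]
  split_ifs <;> first
    | rfl
    | omega
    | (rw [Function.iterate_succ_apply']; rfl)
    | (congr 1; apply Fin.ext; rw [sA, sA]; split_ifs <;> omega)
    | (congr 2; apply Fin.ext; rw [sA, sA]; split_ifs <;> omega)

theorem face_zero {X : Type*} [Rack' X] {n : ℕ} (x : Fin (n + 1) → X)
    (l : Fin (n + 1)) (h : (l : ℕ) = 0) : tface l x = face l x := by
  funext j
  simp [tface, face, h]

theorem sum_shift {M : Type*} [AddCommGroup M] (f : ℕ → M) (N : ℕ) :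
    ∑ k ∈ Finset.Icc 1 N, f (k + 1) = ∑ k ∈ Finset.Icc 1 N, f k + (f (N + 1) - f 1) := by
  induction N with
  | zero => simp
  | succ N ih =>
    rw [Finset.sum_Icc_succ_top (by omega), Finset.sum_Icc_succ_top (by omega), ih]
    abel

theorem bdry_of {X : Type*} [Rack' X] {n : ℕ} (x : Fin (n + 1) → X) :
    bdry n (FreeAbelianGroup.of x) = ∑ i : Fin (n + 1), ((-1 : ℤ) ^ ((i : ℕ) + 1)) •
        (FreeAbelianGroup.of (face i x) - FreeAbelianGroup.of (tface i x)) := by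
  rw [bdry, FreeAbelianGroup.lift_apply_of]
  refine Finset.sum_congr rfl fun i _ => ?_
  split_ifs with h
  · rw [face_zero x i h, sub_self, smul_zero]
  · rfl

theorem main {X : Type*} [Rack' X] (N : ℕ)
    (hp : ∀ x : X, (Rack'.kink (X := X))^[N] x = x) {n : ℕ} (z : Fin (n + 1) → X) (a : X)
    (i i' : Fin (n + 1)) (h : (i' : ℕ) = i + 1) :
    bdry n (∑ k ∈ Finset.Icc 1 N, FreeAbelianGroup.of (w z a i k)) ∈ NDsub X N n := by
  simp only [map_sum, bdry_of]
  rw [Finset.sum_comm]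
  simp only [← Finset.smul_sum, Finset.sum_sub_distrib]
  have hne : i' ≠ i := by intro e; rw [e] at h; omega
  rw [← Finset.add_sum_erase _ _ (Finset.mem_univ i),
    ← Finset.add_sum_erase _ _ (Finset.mem_erase.2 ⟨hne, Finset.mem_univ i'⟩), ← add_assoc]
  refine add_mem ?_ (sum_mem fun l hl => ?_)
  · have e1 : ∑ k ∈ Finset.Icc 1 N, FreeAbelianGroup.of (face i (w z a i k))
        = ∑ k ∈ Finset.Icc 1 N, FreeAbelianGroup.of (face i' (w z a i k)) := by
      have hw : ∀ k, w z a i (N + k) = w z a i k := by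
        intro k
        funext j
        simp only [w, add_assoc, Function.iterate_add_apply, hp]
      simp only [face_mid z a _ i i' h]
      rw [sum_shift (fun k => FreeAbelianGroup.of (face i' (w z a i k))) N]
      simp only [hw, sub_self, add_zero]
    simp only [e1, tface_mid z a _ i i' h, h, pow_succ (-1 : ℤ) ((i : ℕ) + 1)]
    simp
  · simp only [Finset.mem_erase, Finset.mem_univ, and_true, ne_eq, Fin.ext_iff] at hl
    apply AddSubgroup.zsmul_mem
    have hi := i'.isLt
    have hll := l.isLt
    rcases lt_or_ge (l : ℕ) i with hlt | hge
    · obtain ⟨p, hpi⟩ : ∃ p, (i : ℕ) = p + 1 := ⟨i - 1, by omega⟩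
      rw [hpi]
      simp only [face_lt z a p _ l (by omega), tface_lt z a p _ l (by omega)]
      exact sub_mem (w_mem _ _ _ (by omega)) (w_mem _ _ _ (by omega))
    · simp only [face_gt z a i _ l (by omega), tface_gt z a i _ l (by omega)]
      exact sub_mem (w_mem _ _ _ (by omega)) (w_mem _ _ _ (by omega))

end NDProof

/-- For a finite rack of rack rank N, the N-degenerate chains form a
subcomplex: the boundary of an N-degenerate chain is N-degenerate. -/
theorem bdry_ndsub {X : Type*} [Rack' X] [Fintype X] (N : ℕ)
    (hN : Finset.univ.lcm
      (fun x : X => Function.minimalPeriod (Rack'.kink (X := X)) x) = N)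
    (n : ℕ) (c : FreeAbelianGroup (Fin (n + 1) → X)) (hc : c ∈ NDsub X N (n + 1)) :
    bdry n c ∈ NDsub X N n := by
  have hp : ∀ x : X, (Rack'.kink (X := X))^[N] x = x := by
    intro x
    apply Function.isPeriodicPt_iff_minimalPeriod_dvd.2
    rw [← hN]
    exact Finset.dvd_lcm (Finset.mem_univ x)
  unfold NDsub at hc
  induction hc using AddSubgroup.closure_induction with
  | mem c hc =>
    obtain ⟨z, i, h, rfl⟩ := hc
    convert NDProof.main N hp z (z i) i ⟨(i : ℕ) + 1, h⟩ rfl using 6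
    simp only [NDProof.w, Fin.ext_iff]
  | zero => rw [map_zero]; exact zero_mem _
  | add x y _ _ hx hy => rw [map_add]; exact add_mem hx hy
  | neg x _ hx => rw [map_neg]; exact neg_mem hx
end

section
/- Let X be a finite rack with rack rank N. Define C_n^{ND'}(X) (for n ≥ 2) as the subgroup of C_n^R(X) generated by chains of the form Σ_{k=1}^N (x₁,…,x_{i−1}, x_i^{▷k}, x_i^{▷k}, x_{i+2},…,x_n). Then C_*^{ND'}(X) is a subcomplex of C_*^R(X), i.e., ∂_n(C_n^{ND'}(X)) ⊆ C_{n−1}^{ND'}(X). -/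
open Rack'
/-- The subgroup of N-degenerate n-chains: generated by the chains
Σ_{k=1}^N (x₁,…,x_{i−1}, x_i^{▷k}, x_i^{▷k}, x_{i+2},…,x_n),
where x^{▷k} = π^k(x) for the kink map π. -/
def NDsub' (X : Type*) [Rack' X] (N n : ℕ) :
    AddSubgroup (FreeAbelianGroup (Fin n → X)) :=
  AddSubgroup.closure
    { c | ∃ (z : Fin n → X) (i : Fin n) (h : (i : ℕ) + 1 < n),
        c = ∑ k ∈ Finset.Icc 1 N, FreeAbelianGroup.of
          (fun j => if j = i then (Rack'.kink (X := X))^[k] (z i)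
            else if j = ⟨(i : ℕ) + 1, h⟩ then (Rack'.kink (X := X))^[k] (z i)
            else z j) }

/-- The generating tuple with repeated entries at positions `i`, `i'`. -/
def degTup {X : Type*} [Rack' X] {n : ℕ} (z : Fin n → X) (i i' : Fin n) (k : ℕ) : Fin n → X :=
  fun j => if j = i then (Rack'.kink (X := X))^[k] (z i)
            else if j = i' then (Rack'.kink (X := X))^[k] (z i)
            else z j

theorem act_kink {X : Type*} [Rack' X] (x y : X) :
    Rack'.act x (Rack'.kink y) = Rack'.act x y := by
  have h := Rack'.distrib (Rack'.inv x y) y y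
  rw [Rack'.inv_act] at h
  exact h.symm

theorem act_kink_iter {X : Type*} [Rack' X] (x y : X) (k : ℕ) :
    Rack'.act x ((Rack'.kink (X := X))^[k] y) = Rack'.act x y := by
  induction k with
  | zero => rfl
  | succ k ih => rw [Function.iterate_succ_apply', act_kink, ih]

theorem kink_iter_act {X : Type*} [Rack' X] (x y : X) (k : ℕ) :
    (Rack'.kink (X := X))^[k] (Rack'.act x y) = Rack'.act ((Rack'.kink (X := X))^[k] x) y := by
  induction k with
  | zero => rfl
  | succ k ih =>
    rw [Function.iterate_succ_apply', Function.iterate_succ_apply', ih]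
    exact (Rack'.distrib _ _ _).symm

theorem face_degTup {X : Type*} [Rack' X] {n : ℕ} (z : Fin (n + 1) → X) (m : Fin (n + 1))
    (p p' : Fin n) (k : ℕ) :
    face m (degTup z (m.succAbove p) (m.succAbove p') k) = degTup (face m z) p p' k := by
  funext j
  simp only [face, degTup, Fin.succAbove_right_inj]

theorem tface_degTup {X : Type*} [Rack' X] {n : ℕ} (z : Fin (n + 1) → X) (m : Fin (n + 1))
    (p p' : Fin n) (k : ℕ)
    (h : ((m.succAbove p : Fin (n + 1)) : ℕ) < m ↔ ((m.succAbove p' : Fin (n + 1)) : ℕ) < m) :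
    tface m (degTup z (m.succAbove p) (m.succAbove p') k) = degTup (tface m z) p p' k := by
  funext j
  have h1 : m ≠ m.succAbove p := Fin.ne_succAbove m p
  have h2 : m ≠ m.succAbove p' := Fin.ne_succAbove m p'
  simp only [tface, degTup, Fin.succAbove_right_inj, if_neg h1, if_neg h2]
  by_cases hj : j = p
  · subst hj
    by_cases hm : ((m.succAbove j : Fin (n + 1)) : ℕ) < m <;> simp [hm, kink_iter_act]
  · by_cases hj' : j = p'
    · subst hj'
      by_cases hm : ((m.succAbove j : Fin (n + 1)) : ℕ) < m
      · have := h.2 hm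
        simp [hm, this, hj, kink_iter_act]
      · have := fun q => hm (h.1 q)
        simp only [if_neg hm, if_neg this, if_neg hj, if_true]
    · simp [hj, hj']

theorem face_castSucc_succ {X : Type*} [Rack' X] {n : ℕ} (z : Fin (n + 1) → X)
    (p : Fin n) (k : ℕ) :
    face p.castSucc (degTup z p.castSucc p.succ k) = face p.succ (degTup z p.castSucc p.succ k) := by
  funext j
  simp only [face, degTup, Fin.succAbove, Fin.ext_iff, Fin.lt_def]
  split_ifs <;> simp_all <;> omega

/-- Common form of the twisted faces at the repeated positions. -/
def midTup {X : Type*} [Rack' X] {n : ℕ} (z : Fin (n + 1) → X) (p : Fin n) (y : X) : Fin n → X :=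
  fun j => if j < p then Rack'.act (z j.castSucc) (z p.castSucc) else
    if j = p then y else z j.succ

theorem tface_castSucc {X : Type*} [Rack' X] {n : ℕ} (z : Fin (n + 1) → X)
    (p : Fin n) (k : ℕ) :
    tface p.castSucc (degTup z p.castSucc p.succ k) =
      midTup z p ((Rack'.kink (X := X))^[k] (z p.castSucc)) := by
  funext j
  rcases lt_trichotomy j p with h | h | h
  · have e : p.castSucc.succAbove j = j.castSucc := Fin.succAbove_of_castSucc_lt _ _ (by simpa)
    have a : j.castSucc ≠ p.castSucc := by simpa using h.ne
    have b : j.castSucc ≠ p.succ := by simp only [ne_eq, Fin.ext_iff, Fin.lt_def] at *; simp; omega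
    have c : (j : ℕ) < p := h
    simp [tface, degTup, midTup, e, h, a, b, act_kink_iter, h.ne]
  · subst h
    have e : j.castSucc.succAbove j = j.succ := Fin.succAbove_of_le_castSucc _ _ le_rfl
    simp [tface, degTup, midTup, e]
  · have e : p.castSucc.succAbove j = j.succ :=
      Fin.succAbove_of_le_castSucc _ _ (by simpa using h.le)
    have a : j.succ ≠ p.castSucc := by simp only [ne_eq, Fin.ext_iff, Fin.lt_def] at *; simp; omega
    have b : j.succ ≠ p.succ := by simpa using h.ne'
    have c : ¬ ((j : ℕ) + 1 < p) := by simp only [Fin.lt_def] at h; omega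
    simp [tface, degTup, midTup, e, h.ne', a, c, h.not_gt]

theorem tface_succ {X : Type*} [Rack' X] {n : ℕ} (z : Fin (n + 1) → X)
    (p : Fin n) (k : ℕ) :
    tface p.succ (degTup z p.castSucc p.succ k) =
      midTup z p ((Rack'.kink (X := X))^[k + 1] (z p.castSucc)) := by
  funext j
  have s : p.succ ≠ p.castSucc := by simp [Fin.ext_iff]
  rcases lt_trichotomy j p with h | h | h
  · have e : p.succ.succAbove j = j.castSucc :=
      Fin.succAbove_of_castSucc_lt _ _ (by simp only [Fin.lt_def] at *; simp; omega)
    have a : j.castSucc ≠ p.castSucc := by simpa using h.ne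
    have b : j.castSucc ≠ p.succ := by simp only [ne_eq, Fin.ext_iff, Fin.lt_def] at *; simp; omega
    have c : (j : ℕ) < p + 1 := by simp only [Fin.lt_def] at h; omega
    simp [tface, degTup, midTup, e, h, b, c, act_kink_iter, h.ne]
  · subst h
    have e : j.succ.succAbove j = j.castSucc := Fin.succAbove_of_castSucc_lt _ _ (by simp)
    simp only [tface, degTup, midTup, e, Function.iterate_succ_apply']
    simp [s, Rack'.kink]
  · have e : p.succ.succAbove j = j.succ :=
      Fin.succAbove_of_le_castSucc _ _ (by simp only [Fin.lt_def, Fin.le_def] at *; simp; omega)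
    have a : j.succ ≠ p.castSucc := by simp only [ne_eq, Fin.ext_iff, Fin.lt_def] at *; simp; omega
    have b : j.succ ≠ p.succ := by simpa using h.ne'
    simp [tface, degTup, midTup, e, h.ne', a, h.not_gt, h.le]

theorem face_zero_eq {X : Type*} [Rack' X] {n : ℕ} (i : Fin (n + 1)) (hi : (i : ℕ) = 0)
    (x : Fin (n + 1) → X) : face i x = tface i x := by
  funext j
  simp [face, tface, hi]

theorem bdry_of {X : Type*} [Rack' X] (n : ℕ) (x : Fin (n + 1) → X) :
    bdry n (FreeAbelianGroup.of x) = ∑ i : Fin (n + 1), ((-1 : ℤ) ^ ((i : ℕ) + 1)) •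
        (FreeAbelianGroup.of (face i x) - FreeAbelianGroup.of (tface i x)) := by
  rw [bdry, FreeAbelianGroup.lift_apply_of]
  refine Finset.sum_congr rfl fun i _ => ?_
  split_ifs with h
  · rw [face_zero_eq i h]; simp
  · rfl

theorem degTup_mem {X : Type*} [Rack' X] (N n : ℕ) (z : Fin n → X) (p p' : Fin n)
    (h : (p' : ℕ) = p + 1) :
    ∑ k ∈ Finset.Icc 1 N, FreeAbelianGroup.of (degTup z p p' k) ∈ NDsub' X N n := by
  have hp : (p : ℕ) + 1 < n := h ▸ p'.2
  obtain rfl : p' = ⟨p + 1, hp⟩ := Fin.ext h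
  exact AddSubgroup.subset_closure ⟨z, p, hp, rfl⟩

theorem sum_shift {A : Type*} [AddCommGroup A] (f : ℕ → A) (N : ℕ) (h : f (N + 1) = f 1) :
    ∑ k ∈ Finset.Icc 1 N, f k = ∑ k ∈ Finset.Icc 1 N, f (k + 1) := by
  have key : ∀ M : ℕ, ∑ k ∈ Finset.Icc 1 M, f k + f (M + 1)
      = ∑ k ∈ Finset.Icc 1 M, f (k + 1) + f 1 := by
    intro M
    induction M with
    | zero => simp
    | succ M ih =>
      rw [Finset.sum_Icc_succ_top (by omega), Finset.sum_Icc_succ_top (by omega), ih]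
      abel
  have := key N
  rw [h] at this
  exact add_right_cancel this

/-- For a finite rack of rack rank N, the alternative degenerate chains
(with repeated entries x_i^{▷k}, x_i^{▷k}) also form a subcomplex. -/
theorem bdry_ndsub' {X : Type*} [Rack' X] [Fintype X] (N : ℕ)
    (hN : Finset.univ.lcm
      (fun x : X => Function.minimalPeriod (Rack'.kink (X := X)) x) = N)
    (n : ℕ) (c : FreeAbelianGroup (Fin (n + 1) → X)) (hc : c ∈ NDsub' X N (n + 1)) :
    bdry n c ∈ NDsub' X N n := by
  have hper : ∀ x : X, (Rack'.kink (X := X))^[N] x = x := by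
    intro x
    have hd : Function.minimalPeriod (Rack'.kink (X := X)) x ∣ N := by
      rw [← hN]
      exact Finset.dvd_lcm (f := fun x : X => Function.minimalPeriod (Rack'.kink (X := X)) x)
        (Finset.mem_univ x)
    exact Function.isPeriodicPt_iff_minimalPeriod_dvd.2 hd
  suffices hle : NDsub' X N (n + 1) ≤ (NDsub' X N n).comap (bdry n) from hle hc
  unfold NDsub'
  rw [AddSubgroup.closure_le]
  rintro _ ⟨z, i, h, rfl⟩
  change bdry n (∑ k ∈ Finset.Icc 1 N, FreeAbelianGroup.of (degTup z i ⟨(i : ℕ) + 1, h⟩ k))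
    ∈ NDsub' X N n
  obtain ⟨p, rfl⟩ : ∃ p : Fin n, i = p.castSucc := ⟨⟨i, by omega⟩, rfl⟩
  have hs : (⟨(p.castSucc : ℕ) + 1, h⟩ : Fin (n + 1)) = p.succ := rfl
  rw [hs, map_sum]
  simp only [bdry_of]
  rw [Finset.sum_comm]
  simp only [← Finset.smul_sum, Finset.sum_sub_distrib]
  have hne : p.succ ≠ p.castSucc := by simp [Fin.ext_iff]
  rw [← Finset.add_sum_erase _ _ (Finset.mem_univ p.castSucc),
    ← Finset.add_sum_erase _ _ (Finset.mem_erase.2 ⟨hne, Finset.mem_univ p.succ⟩), ← add_assoc]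
  refine add_mem ?_ (sum_mem ?_)
  · convert zero_mem (NDsub' X N n)
    simp only [face_castSucc_succ, tface_castSucc, tface_succ]
    rw [sum_shift (fun k => FreeAbelianGroup.of
      (midTup z p ((Rack'.kink (X := X))^[k] (z p.castSucc)))) N]
    · simp [pow_succ]
    · simp only [Function.iterate_add_apply, hper, Function.iterate_one]
  · intro m hm
    simp only [Finset.mem_erase, Finset.mem_univ, and_true] at hm
    obtain ⟨hm1, hm2⟩ := hm
    obtain ⟨q, hq⟩ := Fin.exists_succAbove_eq hm2.symm
    obtain ⟨q', hq'⟩ := Fin.exists_succAbove_eq hm1.symm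
    have key : (q' : ℕ) = q + 1 ∧ ((p : ℕ) < m ↔ (p : ℕ) + 1 < m) := by
      have h1 := congrArg Fin.val hq
      have h2 := congrArg Fin.val hq'
      simp only [Fin.succAbove, Fin.lt_def, Fin.ext_iff, ne_eq] at h1 h2 hm1 hm2
      simp only [Fin.val_castSucc, Fin.val_succ] at h1 h2 hm1 hm2
      split_ifs at h1 h2 <;> simp only [Fin.val_castSucc, Fin.val_succ] at h1 h2 <;> omega
    have key2 : ((m.succAbove q : Fin (n + 1)) : ℕ) < m ↔
        ((m.succAbove q' : Fin (n + 1)) : ℕ) < m := by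
      rw [hq, hq']; exact key.2
    rw [← hq, ← hq']
    simp only [face_degTup, tface_degTup z m q q' _ key2]
    exact zsmul_mem (sub_mem (degTup_mem _ _ _ _ _ key.1) (degTup_mem _ _ _ _ _ key.1)) _
end
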